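/- Fix an integer n ≥ 2 and complex numbers α(k,j) for k ∈ {1,…,n}, j ≥ 1, and assume there is a real number r < 1 with |α(k,j)| ≤ r for all k, j. Define p(k,j) = ∏_{i=1}^{j} (1 − |α(k,i)|²), and set D_{q+1} = ∏_{j=1}^{q} s_j for q ≥ 1. Then lim_{q→∞} (log D_{q+1})/(q·n^q) = Σ_{k=1}^n Σ_{j=1}^∞ log(1 − |α(k,j)|²) / n^j, the inner series converging absolutely. -/

import Mathlib

open Filter

/-- The weight `t(w)` of a word `w` over the alphabet `Fin n`: if
`w = i₁^{j₁} i₂^{j₂} ⋯ i_m^{j_m}` is the run decomposition of `w`, then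
`t(w) = ∏_t p (i_t) (j_t)`. -/
noncomputable def runProd {n : ℕ} (p : Fin n → ℕ → ℝ) (w : List (Fin n)) : ℝ :=
  ((w.splitBy (· == ·)).map (fun r =>
    match r with
    | [] => 1
    | a :: t => p a (t.length + 1))).prod

/-- `sWord n p q = ∏_w t(w)`, the product over all `n^q` words `w` of length `q`. -/
noncomputable def sWord (n : ℕ) (p : Fin n → ℕ → ℝ) (q : ℕ) : ℝ :=
  ∏ f : Fin q → Fin n, runProd p (List.ofFn f)

open Finset Topology

theorem runProd_replicate_append {n : ℕ} {p : Fin n → ℕ → ℝ} (hp : ∀ k, p k 0 = 1) (a : Fin n)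
    (j : ℕ) {m : List (Fin n)} (hm : ∀ x ∈ m.head?, x ≠ a) :
    runProd p (List.replicate j a ++ m) = p a j * runProd p m := by
  cases j with
  | zero => simp [hp]
  | succ j =>
    unfold runProd
    rw [List.splitBy_append, List.splitBy_of_isChain (l := List.replicate (j + 1) a) (by simp)]
    · simp [List.replicate_succ]
    · exact List.isChain_replicate_of_rel _ (by simp)
    · intro x hx y hy
      obtain rfl := List.eq_of_mem_replicate (List.mem_of_mem_getLast? hx)
      simpa using (hm y hy).symm

/-- The number of leading letters of `w` that are equal to `a`. -/
def leadingCount {n : ℕ} (a : Fin n) (w : List (Fin n)) : ℕ :=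
  (w.takeWhile (· == a)).length

theorem leadingCount_cons {n : ℕ} (a b : Fin n) (w : List (Fin n)) :
    leadingCount a (b :: w) = if b = a then leadingCount a w + 1 else 0 := by
  by_cases h : b = a <;> simp [leadingCount, h]

theorem replicate_leadingCount_append {n : ℕ} (a : Fin n) (w : List (Fin n)) :
    List.replicate (leadingCount a w) a ++ w.dropWhile (· == a) = w := by
  conv_rhs => rw [← List.takeWhile_append_dropWhile (p := (· == a)) (l := w)]
  congr 1
  refine (List.eq_replicate_iff.2 ⟨rfl, fun b hb => ?_⟩).symm
  simpa using List.mem_takeWhile_imp hb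

theorem runProd_cons {n : ℕ} {p c : Fin n → ℕ → ℝ}
    (hp : ∀ k j, p k j = ∏ i ∈ range j, c k i) (a : Fin n) (w : List (Fin n)) :
    runProd p (a :: w) = runProd p w * c a (leadingCount a w) := by
  have hp0 : ∀ k, p k 0 = 1 := fun k => by simp [hp]
  have hm : ∀ x ∈ (w.dropWhile (· == a)).head?, x ≠ a := by
    intro x hx
    have := List.head?_dropWhile_not (· == a) w
    rw [Option.mem_def.1 hx] at this
    simpa using this
  have hw := runProd_replicate_append hp0 a (leadingCount a w) hm
  have haw := runProd_replicate_append hp0 a (leadingCount a w + 1) hm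
  rw [List.replicate_succ, List.cons_append, replicate_leadingCount_append] at haw
  rw [replicate_leadingCount_append] at hw
  rw [haw, hw, hp, hp, prod_range_succ]
  ring

theorem runProd_pos {n : ℕ} {p c : Fin n → ℕ → ℝ}
    (hp : ∀ k j, p k j = ∏ i ∈ range j, c k i) (hc : ∀ k j, 0 < c k j) (w : List (Fin n)) :
    0 < runProd p w := by
  induction w with
  | nil => simp [runProd]
  | cons a w ih => rw [runProd_cons hp]; exact mul_pos ih (hc _ _)

theorem sWord_pos {n : ℕ} {p c : Fin n → ℕ → ℝ}
    (hp : ∀ k j, p k j = ∏ i ∈ range j, c k i) (hc : ∀ k j, 0 < c k j) (q : ℕ) :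
    0 < sWord n p q :=
  prod_pos fun _ _ => runProd_pos hp hc _

theorem sum_words_succ {n : ℕ} (q : ℕ) (F : List (Fin n) → ℝ) :
    ∑ f : Fin (q + 1) → Fin n, F (List.ofFn f) =
      ∑ a, ∑ f : Fin q → Fin n, F (a :: List.ofFn f) := by
  rw [← (Fin.consEquiv fun _ : Fin (q + 1) => Fin n).sum_comp, Fintype.sum_prod_type]
  simp [Fin.consEquiv, List.ofFn_succ]

theorem sum_words_leadingCount_div {n : ℕ} (hn : n ≠ 0) (a : Fin n) (q : ℕ) (F : ℕ → ℝ) :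
    (∑ f : Fin q → Fin n, F (leadingCount a (List.ofFn f))) / (n : ℝ) ^ q =
      F q / (n : ℝ) ^ q + ((n : ℝ) - 1) * ∑ j ∈ range q, F j / (n : ℝ) ^ (j + 1) := by
  have hn' : (n : ℝ) ≠ 0 := by exact_mod_cast hn
  induction q generalizing F with
  | zero => simp [leadingCount]
  | succ q ih =>
    have hsplit : ∑ f : Fin (q + 1) → Fin n, F (leadingCount a (List.ofFn f)) =
        (∑ f : Fin q → Fin n, F (leadingCount a (List.ofFn f) + 1)) +
          ((n : ℝ) - 1) * ((n : ℝ) ^ q * F 0) := by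
      rw [sum_words_succ q fun w => F (leadingCount a w), ← add_sum_erase _ _ (mem_univ a)]
      congr 1
      · simp [leadingCount_cons]
      · have hb : ∀ b ∈ univ.erase a,
            ∑ f : Fin q → Fin n, F (leadingCount a (b :: List.ofFn f)) = (n : ℝ) ^ q * F 0 := by
          intro b hb
          simp [leadingCount_cons, ne_of_mem_erase hb]
        rw [sum_congr rfl hb, sum_const, card_erase_of_mem (mem_univ a), card_univ,
          Fintype.card_fin, nsmul_eq_mul, Nat.cast_pred (Nat.pos_of_ne_zero hn)]
    have h := ih fun j => F (j + 1)
    have hsum : ∑ j ∈ range q, F (j + 1) / (n : ℝ) ^ (j + 1 + 1) =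
        (∑ j ∈ range q, F (j + 1) / (n : ℝ) ^ (j + 1)) / n := by
      rw [sum_div]
      exact sum_congr rfl fun j _ => by rw [pow_succ _ (j + 1), div_div]
    rw [hsplit, sum_range_succ', hsum, add_div, pow_succ, ← div_div, h]
    field_simp
    ring

theorem log_sWord_div {n : ℕ} (hn : n ≠ 0) {p c : Fin n → ℕ → ℝ}
    (hp : ∀ k j, p k j = ∏ i ∈ range j, c k i) (hc : ∀ k j, 0 < c k j) (q : ℕ) :
    Real.log (sWord n p q) / (n : ℝ) ^ q =
      ∑ i ∈ range q, (∑ a, ((∑ f : Fin i → Fin n,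
        Real.log (c a (leadingCount a (List.ofFn f)))) / (n : ℝ) ^ i)) / n := by
  have hn' : (n : ℝ) ≠ 0 := by exact_mod_cast hn
  have hlog : ∀ q, Real.log (sWord n p q) =
      ∑ f : Fin q → Fin n, Real.log (runProd p (List.ofFn f)) := fun q =>
    Real.log_prod fun f _ => (runProd_pos hp hc _).ne'
  induction q with
  | zero => simp [hlog, runProd]
  | succ q ih =>
    rw [sum_range_succ, ← ih, hlog, hlog, sum_words_succ q fun w => Real.log (runProd p w)]
    have h : ∀ a (f : Fin q → Fin n), Real.log (runProd p (a :: List.ofFn f)) =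
        Real.log (runProd p (List.ofFn f)) + Real.log (c a (leadingCount a (List.ofFn f))) :=
      fun a f => by rw [runProd_cons hp, Real.log_mul (runProd_pos hp hc _).ne' (hc _ _).ne']
    simp only [h, sum_add_distrib, sum_const, card_univ, Fintype.card_fin, nsmul_eq_mul,
      ← sum_div]
    field_simp
    ring

theorem tendsto_sum_pow_mul_div {b : ℝ} (hb : 1 < b) {u : ℕ → ℝ} {l : ℝ}
    (hu : Tendsto (fun j : ℕ => u j / j) atTop (𝓝 l)) :
    Tendsto (fun q : ℕ => (∑ j ∈ Icc 1 q, b ^ j * u j) / (q * b ^ q)) atTop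
      (𝓝 (l * (1 - b⁻¹)⁻¹)) := by
  have hb0 : 0 < b := by linarith
  obtain ⟨C, hC⟩ := hu.abs.bddAbove_range
  replace hC : ∀ j : ℕ, |u j / j| ≤ C := fun j => hC ⟨j, rfl⟩
  have hC0 : 0 ≤ C := (abs_nonneg _).trans (hC 0)
  have hgeom : HasSum (fun i : ℕ => l * b⁻¹ ^ i) (l * (1 - b⁻¹)⁻¹) :=
    (hasSum_geometric_of_lt_one (by positivity) (inv_lt_one_of_one_lt₀ hb)).mul_left l
  have key := tendsto_tsum_of_dominated_convergence (𝓕 := atTop)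
    (f := fun q i : ℕ => if i < q then u (q - i) / q * b⁻¹ ^ i else 0)
    (g := fun i => l * b⁻¹ ^ i) (bound := fun i => C * b⁻¹ ^ i)
    ((summable_geometric_of_lt_one (by positivity) (inv_lt_one_of_one_lt₀ hb)).mul_left C)
    (fun i => by
      have h : Tendsto (fun q : ℕ => u (q - i) / q) atTop (𝓝 l) := by
        rw [← tendsto_add_atTop_iff_nat i]
        have h1 := hu.mul (tendsto_natCast_div_add_atTop (i : ℝ))
        rw [mul_one] at h1
        refine h1.congr' ?_
        filter_upwards [eventually_gt_atTop 0] with m hm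
        have : (m : ℝ) ≠ 0 := by positivity
        simp only [Nat.add_sub_cancel, Nat.cast_add]
        field_simp
      refine (h.mul_const (b⁻¹ ^ i)).congr' ?_
      filter_upwards [eventually_gt_atTop i] with q hq
      rw [if_pos hq])
    (Eventually.of_forall fun q i => by
      have hpow : 0 < b⁻¹ ^ i := by positivity
      split_ifs with hi
      · rw [Real.norm_eq_abs, abs_mul, abs_of_pos hpow]
        refine mul_le_mul_of_nonneg_right ?_ hpow.le
        have hqi : (0 : ℝ) < (q - i : ℕ) := by exact_mod_cast Nat.sub_pos_of_lt hi
        refine le_trans ?_ (hC (q - i))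
        rw [abs_div, abs_div, Nat.abs_cast, Nat.abs_cast]
        gcongr
        exact Nat.sub_le q i
      · simpa using mul_nonneg hC0 hpow.le)
  rw [hgeom.tsum_eq] at key
  refine key.congr fun q => ?_
  rw [tsum_eq_sum (s := range q) fun i hi => if_neg (by simpa using hi),
    ← Ico_succ_right_eq_Icc, Nat.succ_eq_succ, Nat.succ_eq_add_one, sum_Ico_eq_sum_range,
    Nat.add_sub_cancel, ← sum_range_reflect, sum_div]
  refine sum_congr rfl fun i hi => ?_
  have hi := mem_range.1 hi
  rw [if_pos (by omega), show q - (q - 1 - i) = 1 + i by omega]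
  have hq : (q : ℝ) ≠ 0 := by
    have : q ≠ 0 := by omega
    exact_mod_cast this
  have hpow : b ^ q = b ^ (1 + i) * b ^ (q - 1 - i) := by
    rw [← pow_add, show 1 + i + (q - 1 - i) = q by omega]
  rw [hpow, inv_pow]
  field_simp

/-- For complex numbers `α(k,j)` with `|α(k,j)| ≤ r < 1`, set
`p(k,j) = ∏_{i=1}^j (1 - |α(k,i)|²)` and `D_{q+1} = ∏_{j=1}^q s_j`. Then each series
`Σ_{j=1}^∞ log(1 - |α(k,j)|²)/n^j` converges absolutely and
`lim_{q→∞} (log D_{q+1})/(q·n^q) = Σ_{k=1}^n Σ_{j=1}^∞ log(1 - |α(k,j)|²)/n^j`. -/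
theorem stmt_15 (n : ℕ) (hn : 2 ≤ n) (α : Fin n → ℕ → ℂ)
    (r : ℝ) (hr : r < 1)
    (hbound : ∀ k, ∀ j, 1 ≤ j → ‖α k j‖ ≤ r)
    (p : Fin n → ℕ → ℝ)
    (hp : ∀ k j, p k j = ∏ i ∈ Finset.Icc 1 j, (1 - ‖α k i‖ ^ 2))
    (D : ℕ → ℝ)
    (hD : ∀ q, 1 ≤ q → D (q + 1) = ∏ j ∈ Finset.Icc 1 q, sWord n p j) :
    (∀ k, Summable (fun j : ℕ => |Real.log (1 - ‖α k (j + 1)‖ ^ 2)| / (n : ℝ) ^ (j + 1))) ∧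
    Tendsto (fun q : ℕ => Real.log (D (q + 1)) / (q * (n : ℝ) ^ q)) atTop
      (nhds (∑ k, ∑' j : ℕ, Real.log (1 - ‖α k (j + 1)‖ ^ 2) / (n : ℝ) ^ (j + 1))) := by
  have hn0 : n ≠ 0 := by omega
  have hn1 : (1 : ℝ) < n := by exact_mod_cast hn
  have hnpos : (0 : ℝ) < n := by linarith
  have hr0 : 0 ≤ r := (norm_nonneg _).trans (hbound ⟨0, by omega⟩ 1 le_rfl)
  set c : Fin n → ℕ → ℝ := fun k j => 1 - ‖α k (j + 1)‖ ^ 2 with hc_def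
  have hc_lower : ∀ k j, 1 - r ^ 2 ≤ c k j := fun k j => by
    have := hbound k (j + 1) (by omega)
    simp only [hc_def]
    gcongr
  have hr2 : 0 < 1 - r ^ 2 := by nlinarith
  have hc : ∀ k j, 0 < c k j := fun k j => hr2.trans_le (hc_lower k j)
  have hpc : ∀ k j, p k j = ∏ i ∈ range j, c k i := fun k j => by
    rw [hp, ← Ico_succ_right_eq_Icc, Nat.succ_eq_succ, Nat.succ_eq_add_one,
      prod_Ico_eq_prod_range, Nat.add_sub_cancel]
    exact prod_congr rfl fun i _ => by rw [add_comm 1 i]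
  have hlog_bound : ∀ k j, |Real.log (c k j)| ≤ -Real.log (1 - r ^ 2) := fun k j => by
    have hle : c k j ≤ 1 := by simp only [hc_def]; linarith [sq_nonneg ‖α k (j + 1)‖]
    rw [abs_of_nonpos (Real.log_nonpos (hc k j).le hle)]
    exact neg_le_neg (Real.log_le_log hr2 (hc_lower k j))
  have hinv : (n : ℝ)⁻¹ < 1 := inv_lt_one_of_one_lt₀ hn1
  have hgeom : Summable fun j : ℕ => -Real.log (1 - r ^ 2) * (n : ℝ)⁻¹ ^ j :=
    (summable_geometric_of_lt_one (by positivity) hinv).mul_left _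
  have habs : ∀ k, Summable fun j : ℕ => |Real.log (c k j)| / (n : ℝ) ^ (j + 1) := fun k => by
    refine Summable.of_nonneg_of_le (fun j => by positivity) (fun j => ?_)
      ((summable_nat_add_iff 1).2 hgeom)
    rw [inv_pow, ← div_eq_mul_inv]
    gcongr
    exact hlog_bound k j
  refine ⟨habs, ?_⟩
  have hsum : ∀ k, Summable fun j : ℕ => Real.log (c k j) / (n : ℝ) ^ (j + 1) := fun k =>
    Summable.of_abs ((habs k).congr fun j => by
      rw [abs_div, abs_of_pos (pow_pos hnpos (j + 1))])
  set S : Fin n → ℝ := fun k => ∑' j : ℕ, Real.log (c k j) / (n : ℝ) ^ (j + 1)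
  have hlead : ∀ a, Tendsto (fun i : ℕ => (∑ f : Fin i → Fin n,
      Real.log (c a (leadingCount a (List.ofFn f)))) / (n : ℝ) ^ i) atTop
      (𝓝 (((n : ℝ) - 1) * S a)) := fun a => by
    have h0 : Tendsto (fun q : ℕ => Real.log (c a q) / (n : ℝ) ^ q) atTop (𝓝 0) := by
      refine squeeze_zero_norm (fun q => ?_) hgeom.tendsto_atTop_zero
      rw [Real.norm_eq_abs, abs_div, abs_of_pos (pow_pos hnpos q), inv_pow, ← div_eq_mul_inv]
      gcongr
      exact hlog_bound a q
    have h := h0.add ((hsum a).hasSum.tendsto_sum_nat.const_mul ((n : ℝ) - 1))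
    rw [zero_add] at h
    exact h.congr fun q => (sum_words_leadingCount_div hn0 a q fun j => Real.log (c a j)).symm
  have hword : Tendsto (fun q : ℕ => Real.log (sWord n p q) / (n : ℝ) ^ q / q) atTop
      (𝓝 ((∑ a, ((n : ℝ) - 1) * S a) / n)) := by
    refine ((tendsto_finsetSum _ fun a _ => hlead a).div_const (n : ℝ)).cesaro.congr fun q => ?_
    rw [log_sWord_div hn0 hpc hc, inv_mul_eq_div]
  have hfinal := tendsto_sum_pow_mul_div hn1 hword
  have hval : (∑ a, ((n : ℝ) - 1) * S a) / n * (1 - (n : ℝ)⁻¹)⁻¹ = ∑ a, S a := by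
    have : (n : ℝ) - 1 ≠ 0 := by linarith
    rw [← mul_sum]
    field_simp
  rw [hval] at hfinal
  refine hfinal.congr' ?_
  filter_upwards [eventually_ge_atTop 1] with q hq
  rw [hD q hq, Real.log_prod fun j _ => (sWord_pos hpc hc j).ne']
  congr 1
  exact sum_congr rfl fun j _ => mul_div_cancel₀ _ (pow_pos hnpos j).ne'
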